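/- For every bipartite density matrix ρ on ℂ^m⊗ℂ^n and every POVM {P_j} on ℂ^m, the quadratic Holevo quantity is bounded by the quadratic entropy of the reduced state: χ_Q(P, b) ≤ S_Q(ρ_a), where χ_Q(P, b) = S_Q(ρ_b) − ∑_{j : p_j ≠ 0} p_j S_Q(ρ_{b|j}) with p_j = Tr((P_j ⊗ I) ρ) and ρ_{b|j} = (1/p_j)·Tr_a((P_j ⊗ I) ρ). -/

import Mathlib

open scoped Kronecker
open Finset Matrix
open scoped ComplexOrder

noncomputable section

/-- A density matrix: positive semidefinite with unit trace. -/
def IsDensity {d : Type} [Fintype d] [DecidableEq d] (ρ : Matrix d d ℂ) : Prop :=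
  ρ.PosSemidef ∧ ρ.trace = 1

/-- An entropy family: a real number assigned to every square complex matrix of
every finite dimension. -/
def EntropyFamily : Type 1 :=
  ∀ (d : Type) [Fintype d] [DecidableEq d], Matrix d d ℂ → ℝ

/-- Concavity of an entropy family. -/
def EntropyFamily.Concave (S : EntropyFamily) : Prop :=
  ∀ (d : Type) [Fintype d] [DecidableEq d] (k : ℕ) (p : Fin k → ℝ)
    (ρ : Fin k → Matrix d d ℂ),
    (∀ j, 0 ≤ p j) → ∑ j, p j = 1 → (∀ j, IsDensity (ρ j)) →
    ∑ j, p j * S d (ρ j) ≤ S d (∑ j, (p j : ℂ) • ρ j)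

/-- The entropy family depends only on the nonzero spectrum: `S (A Aᴴ) = S (Aᴴ A)`. -/
def EntropyFamily.SpectrumDep (S : EntropyFamily) : Prop :=
  ∀ (d e : Type) [Fintype d] [DecidableEq d] [Fintype e] [DecidableEq e]
    (A : Matrix d e ℂ), S d (A * Aᴴ) = S e (Aᴴ * A)

/-- Partial trace over the first tensor factor. -/
def trA {da db : Type} [Fintype da] (ρ : Matrix (da × db) (da × db) ℂ) :
    Matrix db db ℂ :=
  Matrix.of fun j j' => ∑ i, ρ (i, j) (i, j')

/-- Partial trace over the second tensor factor. -/
def trB {da db : Type} [Fintype db] (ρ : Matrix (da × db) (da × db) ℂ) :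
    Matrix da da ℂ :=
  Matrix.of fun i i' => ∑ j, ρ (i, j) (i', j)

/-- A POVM: a finite family of positive semidefinite matrices summing to `1`. -/
def IsPOVM {d : Type} [Fintype d] [DecidableEq d] {k : ℕ}
    (P : Fin k → Matrix d d ℂ) : Prop :=
  (∀ j, (P j).PosSemidef) ∧ ∑ j, P j = 1

/-- Probability of POVM outcome `P` on the first factor: `Tr((P ⊗ I) ρ)`. -/
def prob {da db : Type} [Fintype da] [Fintype db] [DecidableEq da] [DecidableEq db]
    (P : Matrix da da ℂ) (ρ : Matrix (da × db) (da × db) ℂ) : ℝ :=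
  (((P ⊗ₖ (1 : Matrix db db ℂ)) * ρ).trace).re

/-- Conditional state on the second factor given POVM outcome `P`. -/
def condB {da db : Type} [Fintype da] [Fintype db] [DecidableEq da] [DecidableEq db]
    (P : Matrix da da ℂ) (ρ : Matrix (da × db) (da × db) ℂ) : Matrix db db ℂ :=
  (((prob P ρ)⁻¹ : ℝ) : ℂ) • trA ((P ⊗ₖ (1 : Matrix db db ℂ)) * ρ)

/-- The Holevo quantity `χ(P, b)`. -/
def holevoB (S : EntropyFamily) {da db : Type} [Fintype da] [DecidableEq da]
    [Fintype db] [DecidableEq db] {k : ℕ} (P : Fin k → Matrix da da ℂ)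
    (ρ : Matrix (da × db) (da × db) ℂ) : ℝ :=
  S db (trA ρ) -
    ∑ j ∈ univ.filter (fun j => prob (P j) ρ ≠ 0),
      prob (P j) ρ * S db (condB (P j) ρ)

/-- Eigenvalues of a Hermitian matrix (junk value `0` if not Hermitian). -/
def eigs {d : Type} [Fintype d] [DecidableEq d] (X : Matrix d d ℂ) : d → ℝ :=
  if h : X.IsHermitian then h.eigenvalues else 0

/-- von Neumann entropy `S(ρ) = ∑ᵢ (−λᵢ log λᵢ)`. -/
def vN {d : Type} [Fintype d] [DecidableEq d] (ρ : Matrix d d ℂ) : ℝ :=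
  ∑ i, Real.negMulLog (eigs ρ i)

/-- von Neumann entropy as an entropy family. -/
def vNF : EntropyFamily := fun d _ _ ρ => vN ρ

/-- Quadratic entropy `S_Q(ρ) = 1 − Re Tr(ρ²)`. -/
def SQ {d : Type} [Fintype d] (ρ : Matrix d d ℂ) : ℝ := 1 - ((ρ * ρ).trace).re

/-- Quadratic entropy as an entropy family. -/
def SQF : EntropyFamily := fun d _ _ ρ => SQ ρ

/-- The outer product `ψ ψᴴ`. -/
def outer {d : Type} (ψ : d → ℂ) : Matrix d d ℂ := Matrix.vecMulVec ψ (star ψ)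

/-- A unit vector. -/
def UnitVec {d : Type} [Fintype d] (ψ : d → ℂ) : Prop := ∑ i, ‖ψ i‖ ^ 2 = 1

/-- Kraus operators of a quantum channel: `∑ᵢ Kᵢᴴ Kᵢ = 1`. -/
def IsKraus {n r t : ℕ} (K : Fin t → Matrix (Fin r) (Fin n) ℂ) : Prop :=
  ∑ i, (K i)ᴴ * K i = 1

/-- Action of the quantum channel with Kraus operators `K`. -/
def channel {n r t : ℕ} (K : Fin t → Matrix (Fin r) (Fin n) ℂ)
    (ρ : Matrix (Fin n) (Fin n) ℂ) : Matrix (Fin r) (Fin r) ℂ :=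
  ∑ i, K i * ρ * (K i)ᴴ

/-- Conditional joint state after a POVM element with square root `Q` and
outcome probability `p`: `(1/p) (Q ⊗ I) ρ (Q ⊗ I)`. -/
def condJoint {da db : Type} [Fintype da] [Fintype db] [DecidableEq da]
    [DecidableEq db] (Q : Matrix da da ℂ) (p : ℝ)
    (ρ : Matrix (da × db) (da × db) ℂ) : Matrix (da × db) (da × db) ℂ :=
  ((p⁻¹ : ℝ) : ℂ) • ((Q ⊗ₖ (1 : Matrix db db ℂ)) * ρ * (Q ⊗ₖ (1 : Matrix db db ℂ)))

/-- Tsallis entropy with parameter `q`. -/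
def tsallis (q : ℝ) {d : Type} [Fintype d] [DecidableEq d]
    (ρ : Matrix d d ℂ) : ℝ :=
  ((∑ i, eigs ρ i ^ q) - 1) / (1 - q)

/-- Rényi entropy with parameter `q`. -/
def renyi (q : ℝ) {d : Type} [Fintype d] [DecidableEq d]
    (ρ : Matrix d d ℂ) : ℝ :=
  (1 / (1 - q)) * Real.log (∑ i, eigs ρ i ^ q)

/-!
Write `P j = (Q j)ᴴ * Q j`. Stacking the `Q j` gives an isometry, which turns the POVM into a
measurement in an orthonormal basis, coarse-grained over the rows of each `Q j`; convexity of
`B ↦ ‖B‖² / tr B` makes the coarse-graining harmless.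

For a basis measurement of `ρ = Nᴴ * N`, cut `Nᴴ` into slices `A i`. The blocks of `ρ` are
`A i * (A i')ᴴ`, so `trA ρ = ∑ i, A i * (A i)ᴴ`, while `trB ρ` has entries `tr ((A i)ᴴ * A i')`.
Cauchy–Schwarz for the `2 × 2` minors of `A i` and `A i'` bounds
`|tr ((A i)ᴴ * A i')|² - ‖(A i)ᴴ * A i'‖²` by a product of norms of minors, and a second
Cauchy–Schwarz with weights `‖A i‖²` sums these bounds over all pairs.
-/

lemma norm_sum_sq_le_sum_mul_sum_div {ι E : Type*} [SeminormedAddCommGroup E] (s : Finset ι)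
    (x : ι → E) {w : ι → ℝ} (hw : ∀ i ∈ s, 0 ≤ w i) (hx : ∀ i ∈ s, w i = 0 → ‖x i‖ = 0) :
    ‖∑ i ∈ s, x i‖ ^ 2 ≤ (∑ i ∈ s, w i) * ∑ i ∈ s, ‖x i‖ ^ 2 / w i := by
  calc ‖∑ i ∈ s, x i‖ ^ 2 ≤ (∑ i ∈ s, ‖x i‖) ^ 2 := by gcongr; exact norm_sum_le _ _
    _ ≤ (∑ i ∈ s, w i) * ∑ i ∈ s, ‖x i‖ ^ 2 / w i := by
      refine sum_sq_le_sum_mul_sum_of_sq_le_mul s hw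
        (fun i hi => div_nonneg (sq_nonneg _) (hw i hi)) fun i hi => ?_
      rcases eq_or_ne (w i) 0 with h | h
      · simp [hx i hi h]
      · rw [mul_div_cancel₀ _ h]

section Minors

variable {m n R : Type*} [Fintype m] [Fintype n]

lemma trace_submatrix_equiv [AddCommMonoid R] (e : m ≃ n) (X : Matrix n n R) :
    (X.submatrix e e).trace = X.trace :=
  e.sum_comp fun i => X i i

lemma trace_submatrix_swap_right_kronecker [NonUnitalNonAssocSemiring R]
    (X Y : Matrix n n R) : ((X ⊗ₖ Y).submatrix id Prod.swap).trace = (X * Y).trace := by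
  simp only [trace, diag_apply, submatrix_apply, id, kroneckerMap_apply, Fintype.sum_prod_type,
    Prod.fst_swap, Prod.snd_swap, mul_apply]

variable [CommRing R]

/-- The matrix of all `2 × 2` minors of `A`: its entry at `(i, i'), (j, j')` is
`A i j * A i' j' - A i j' * A i' j`, for all ordered pairs of rows and of columns. -/
def minors (A : Matrix m n R) : Matrix (m × m) (n × n) R :=
  A ⊗ₖ A - (A ⊗ₖ A).submatrix id Prod.swap

lemma trace_conjTranspose_minors_mul_minors [StarRing R] (A B : Matrix m n R) :
    ((minors A)ᴴ * minors B).trace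
      = 2 * ((Aᴴ * B).trace ^ 2 - (Aᴴ * B * (Aᴴ * B)).trace) := by
  set K : Matrix (n × n) (n × n) R := (Aᴴ * B) ⊗ₖ (Aᴴ * B) with hK
  have hmul : (A ⊗ₖ A)ᴴ * (B ⊗ₖ B) = K := by
    rw [conjTranspose_kronecker, ← mul_kronecker_mul]
  have hexpand : (minors A)ᴴ * minors B
      = K - (K.submatrix id Prod.swap).submatrix (Equiv.prodComm n n) (Equiv.prodComm n n)
        - (K.submatrix id Prod.swap - K.submatrix (Equiv.prodComm n n) (Equiv.prodComm n n)) := by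
    simp only [minors, conjTranspose_sub, Matrix.sub_mul, Matrix.mul_sub, ← hmul]
    rfl
  rw [hexpand, trace_sub, trace_sub, trace_sub, trace_submatrix_equiv, trace_submatrix_equiv, hK,
    trace_submatrix_swap_right_kronecker, trace_kronecker]
  ring

end Minors

open scoped MatrixOrder in
lemma exists_eq_conjTranspose_mul_self {𝕜 n : Type*} [RCLike 𝕜] [Fintype n] {X : Matrix n n 𝕜}
    (hX : X.PosSemidef) : ∃ Y : Matrix n n 𝕜, X = Yᴴ * Y := by
  classical exact CStarAlgebra.nonneg_iff_eq_star_mul_self.mp hX.nonneg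

/-- The diagonal block `(⟨i| ⊗ 1) ρ (|i⟩ ⊗ 1)` of a bipartite matrix. -/
def diagBlock {a b : Type*} (ρ : Matrix (a × b) (a × b) ℂ) (i : a) : Matrix b b ℂ :=
  ρ.submatrix (Prod.mk i) (Prod.mk i)

/-- The local operation `ρ ↦ (Q ⊗ 1) ρ (Q ⊗ 1)ᴴ` on the first tensor factor. -/
def conjFst {a b r : Type*} [Fintype a] [Fintype b] [DecidableEq b] (Q : Matrix r a ℂ)
    (ρ : Matrix (a × b) (a × b) ℂ) : Matrix (r × b) (r × b) ℂ :=
  (Q ⊗ₖ (1 : Matrix b b ℂ)) * ρ * (Q ⊗ₖ (1 : Matrix b b ℂ))ᴴ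

/-- The unnormalized conditional state `Tr_a((P ⊗ 1) ρ)` on the second factor. -/
def unnormCondB {a b : Type} [Fintype a] [Fintype b] [DecidableEq b] (P : Matrix a a ℂ)
    (ρ : Matrix (a × b) (a × b) ℂ) : Matrix b b ℂ :=
  trA ((P ⊗ₖ (1 : Matrix b b ℂ)) * ρ)

/-- The matrices `Q j` stacked on top of each other. When `∑ j, (Q j)ᴴ * Q j = 1` this is the
Naimark isometry of the POVM `(Q j)ᴴ * Q j`. -/
def stackRows {ι l m R : Type*} (Q : ι → Matrix l m R) : Matrix (ι × l) m R :=
  Matrix.of fun s => Q s.1 s.2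

section PartialTrace

variable {a b r : Type}

lemma trB_isHermitian [Fintype b] {X : Matrix (a × b) (a × b) ℂ} (hX : X.IsHermitian) :
    (trB X).IsHermitian := by
  ext i i'
  simp only [trB, conjTranspose_apply, of_apply, star_sum, hX.apply]

variable [Fintype a]

lemma trA_sum {ι : Type*} (s : Finset ι) (X : ι → Matrix (a × b) (a × b) ℂ) :
    trA (∑ j ∈ s, X j) = ∑ j ∈ s, trA (X j) := by
  ext
  simp only [trA, of_apply, Matrix.sum_apply]
  exact Finset.sum_comm

lemma trA_eq_sum_diagBlock (X : Matrix (a × b) (a × b) ℂ) : trA X = ∑ i, diagBlock X i := by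
  ext
  simp only [trA, diagBlock, of_apply, Matrix.sum_apply, submatrix_apply]

lemma trA_conjTranspose (X : Matrix (a × b) (a × b) ℂ) : trA Xᴴ = (trA X)ᴴ := by
  ext
  simp only [trA, conjTranspose_apply, of_apply, star_sum]

variable [Fintype b]

lemma trace_trA (X : Matrix (a × b) (a × b) ℂ) : (trA X).trace = X.trace := by
  simp only [trA, trace, diag_apply, of_apply, Fintype.sum_prod_type]
  exact Finset.sum_comm

variable [DecidableEq b]

lemma trB_conjFst (Q : Matrix r a ℂ) (ρ : Matrix (a × b) (a × b) ℂ) :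
    trB (conjFst Q ρ) = Q * trB ρ * Qᴴ := by
  ext i i'
  simp only [conjFst, trB, conjTranspose_kronecker, conjTranspose_one, of_apply, mul_apply,
    Fintype.sum_prod_type, kroneckerMap_apply, one_apply, mul_ite, mul_one, mul_zero, ite_mul,
    zero_mul, Finset.sum_ite_eq, Finset.sum_ite_eq', Finset.mem_univ, if_true, Finset.mul_sum,
    Finset.sum_mul]
  rw [Finset.sum_comm]
  exact Finset.sum_congr rfl fun _ _ => Finset.sum_comm

lemma unnormCondB_one [DecidableEq a] (ρ : Matrix (a × b) (a × b) ℂ) :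
    unnormCondB 1 ρ = trA ρ := by
  rw [unnormCondB, one_kronecker_one, Matrix.one_mul]

lemma unnormCondB_sum {ι : Type*} (s : Finset ι) (P : ι → Matrix a a ℂ)
    (ρ : Matrix (a × b) (a × b) ℂ) :
    unnormCondB (∑ j ∈ s, P j) ρ = ∑ j ∈ s, unnormCondB (P j) ρ := by
  have hsum : (∑ j ∈ s, P j) ⊗ₖ (1 : Matrix b b ℂ) = ∑ j ∈ s, P j ⊗ₖ (1 : Matrix b b ℂ) := by
    ext
    simp only [kroneckerMap_apply, Matrix.sum_apply, Finset.sum_mul]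
  simp only [unnormCondB, hsum, Matrix.sum_mul, trA_sum]

variable [Fintype r]

lemma trA_kronecker_one_mul_comm (Q : Matrix r a ℂ) (X : Matrix (a × b) (r × b) ℂ) :
    trA ((Q ⊗ₖ (1 : Matrix b b ℂ)) * X) = trA (X * (Q ⊗ₖ (1 : Matrix b b ℂ))) := by
  ext j j'
  simp only [trA, of_apply, mul_apply, Fintype.sum_prod_type, kroneckerMap_apply, one_apply,
    mul_ite, mul_one, mul_zero, ite_mul, zero_mul, Finset.sum_ite_eq, Finset.sum_ite_eq',
    Finset.mem_univ, if_true]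
  rw [Finset.sum_comm]
  simp only [mul_comm]

lemma unnormCondB_isHermitian {P : Matrix a a ℂ} {ρ : Matrix (a × b) (a × b) ℂ}
    (hP : P.IsHermitian) (hρ : ρ.IsHermitian) : (unnormCondB P ρ).IsHermitian := by
  rw [Matrix.IsHermitian, unnormCondB, ← trA_conjTranspose, conjTranspose_mul, hρ.eq,
    conjTranspose_kronecker, hP.eq, conjTranspose_one, trA_kronecker_one_mul_comm]

lemma trA_conjFst (Q : Matrix r a ℂ) (ρ : Matrix (a × b) (a × b) ℂ) :
    trA (conjFst Q ρ) = unnormCondB (Qᴴ * Q) ρ := by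
  rw [conjFst, Matrix.mul_assoc, trA_kronecker_one_mul_comm, Matrix.mul_assoc,
    conjTranspose_kronecker, conjTranspose_one, ← mul_kronecker_mul, Matrix.mul_one,
    ← trA_kronecker_one_mul_comm, unnormCondB]

lemma sum_diagBlock_conjFst_stackRows {ι : Type*} (Q : ι → Matrix r a ℂ)
    (ρ : Matrix (a × b) (a × b) ℂ) (j : ι) :
    ∑ i, diagBlock (conjFst (stackRows Q) ρ) (j, i) = unnormCondB ((Q j)ᴴ * Q j) ρ := by
  rw [← trA_conjFst, trA_eq_sum_diagBlock]
  rfl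

end PartialTrace

lemma conjTranspose_stackRows_mul_stackRows {ι l m R : Type*} [Fintype ι] [Fintype l]
    [NonUnitalNonAssocSemiring R] [Star R] (Q : ι → Matrix l m R) :
    (stackRows Q)ᴴ * stackRows Q = ∑ j, (Q j)ᴴ * Q j := by
  ext
  simp only [stackRows, mul_apply, conjTranspose_apply, of_apply, Matrix.sum_apply,
    Fintype.sum_prod_type]

section Frobenius

open scoped Matrix.Norms.Frobenius

section Matrix

variable {𝕜 ι l m n : Type*} [RCLike 𝕜] [Fintype ι] [Fintype l] [Fintype m] [Fintype n]

lemma trace_conjTranspose_mul_eq_inner (A B : Matrix m n 𝕜) :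
    (Aᴴ * B).trace = inner 𝕜
      (WithLp.toLp 2 fun i => WithLp.toLp 2 (A i) : PiLp 2 fun _ : m => EuclideanSpace 𝕜 n)
      (WithLp.toLp 2 fun i => WithLp.toLp 2 (B i)) := by
  simp only [trace, diag_apply, mul_apply, conjTranspose_apply, PiLp.inner_apply,
    RCLike.inner_apply, RCLike.star_def]
  rw [Finset.sum_comm]
  simp only [mul_comm]

lemma norm_trace_conjTranspose_mul_le (A B : Matrix m n 𝕜) :
    ‖(Aᴴ * B).trace‖ ≤ ‖A‖ * ‖B‖ := by
  rw [trace_conjTranspose_mul_eq_inner]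
  exact norm_inner_le_norm _ _

lemma trace_conjTranspose_mul_self_eq_norm_sq (A : Matrix m n 𝕜) :
    (Aᴴ * A).trace = (‖A‖ : 𝕜) ^ 2 := by
  rw [trace_conjTranspose_mul_eq_inner, inner_self_eq_norm_sq_to_K]
  rfl

lemma trace_mul_conjTranspose_self_eq_norm_sq (A : Matrix m n 𝕜) :
    (A * Aᴴ).trace = (‖A‖ : 𝕜) ^ 2 := by
  rw [trace_mul_comm, trace_conjTranspose_mul_self_eq_norm_sq]

lemma frobenius_norm_sq_eq_sum (A : Matrix m n 𝕜) : ‖A‖ ^ 2 = ∑ i, ∑ j, ‖A i j‖ ^ 2 := by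
  rw [frobenius_norm_def, ← Real.sqrt_eq_rpow, Real.sq_sqrt (by positivity)]
  simp only [Real.rpow_two]

lemma trace_gram_mul_gram (A B : Matrix m n 𝕜) :
    (A * Aᴴ * (B * Bᴴ)).trace = (‖Aᴴ * B‖ : 𝕜) ^ 2 := by
  rw [← trace_mul_conjTranspose_self_eq_norm_sq, conjTranspose_mul, conjTranspose_conjTranspose,
    Matrix.mul_assoc, trace_mul_comm]
  simp only [Matrix.mul_assoc]

lemma norm_isometry_conj [DecidableEq m] {W : Matrix l m 𝕜} (hW : Wᴴ * W = 1)
    (X : Matrix m m 𝕜) : ‖W * X * Wᴴ‖ = ‖X‖ := by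
  have htrace : ((W * X * Wᴴ)ᴴ * (W * X * Wᴴ)).trace = (Xᴴ * X).trace := by
    calc ((W * X * Wᴴ)ᴴ * (W * X * Wᴴ)).trace = (W * (Xᴴ * (Wᴴ * W) * X * Wᴴ)).trace := by
          simp only [conjTranspose_mul, conjTranspose_conjTranspose, Matrix.mul_assoc]
      _ = (Xᴴ * (Wᴴ * W) * X * (Wᴴ * W)).trace := by rw [trace_mul_comm, Matrix.mul_assoc]
      _ = (Xᴴ * X).trace := by rw [hW, Matrix.mul_one, Matrix.mul_one]
  rw [trace_conjTranspose_mul_self_eq_norm_sq, trace_conjTranspose_mul_self_eq_norm_sq] at htrace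
  norm_cast at htrace
  exact (pow_left_inj₀ (norm_nonneg _) (norm_nonneg _) two_ne_zero).mp htrace

lemma norm_sum_gram_sq (A : ι → Matrix m n 𝕜) :
    ‖∑ s, A s * (A s)ᴴ‖ ^ 2 = ∑ s, ∑ t, ‖(A s)ᴴ * A t‖ ^ 2 := by
  have htrace : ((∑ s, A s * (A s)ᴴ)ᴴ * ∑ s, A s * (A s)ᴴ).trace
      = ∑ s, ∑ t, (‖(A s)ᴴ * A t‖ : 𝕜) ^ 2 := by
    simp only [← trace_gram_mul_gram, conjTranspose_sum, conjTranspose_mul,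
      conjTranspose_conjTranspose, Matrix.sum_mul, Matrix.mul_sum, trace_sum]
    exact Finset.sum_comm
  rw [trace_conjTranspose_mul_self_eq_norm_sq] at htrace
  exact_mod_cast htrace

lemma norm_minors_sq (A : Matrix m n 𝕜) : ‖minors A‖ ^ 2 = 2 * (‖A‖ ^ 4 - ‖A * Aᴴ‖ ^ 2) := by
  have htrace := trace_conjTranspose_minors_mul_minors A A
  have hgram := trace_gram_mul_gram Aᴴ Aᴴ
  rw [conjTranspose_conjTranspose] at hgram
  rw [hgram, trace_conjTranspose_mul_self_eq_norm_sq, trace_conjTranspose_mul_self_eq_norm_sq,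
    ← pow_mul] at htrace
  exact_mod_cast htrace

lemma norm_trace_sq_sub_norm_sq_le_norm_minors_mul (A B : Matrix m n 𝕜) :
    ‖(Aᴴ * B).trace‖ ^ 2 - ‖Aᴴ * B‖ ^ 2 ≤ ‖minors A‖ * ‖minors B‖ / 2 := by
  have htrace_sq : ‖(Aᴴ * B * (Aᴴ * B)).trace‖ ≤ ‖Aᴴ * B‖ ^ 2 := by
    simpa only [conjTranspose_conjTranspose, frobenius_norm_conjTranspose, ← sq]
      using norm_trace_conjTranspose_mul_le (Aᴴ * B)ᴴ (Aᴴ * B)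
  have hminors : 2 * ‖(Aᴴ * B).trace ^ 2 - (Aᴴ * B * (Aᴴ * B)).trace‖
      ≤ ‖minors A‖ * ‖minors B‖ := by
    simpa only [trace_conjTranspose_minors_mul_minors, norm_mul, RCLike.norm_ofNat]
      using norm_trace_conjTranspose_mul_le (minors A) (minors B)
  have htriangle := norm_sub_norm_le ((Aᴴ * B).trace ^ 2) (Aᴴ * B * (Aᴴ * B)).trace
  rw [norm_pow] at htriangle
  linarith

lemma sum_norm_trace_sq_sub_norm_sum_gram_sq_le (A : ι → Matrix m n 𝕜) :
    ∑ s, ∑ t, ‖((A s)ᴴ * A t).trace‖ ^ 2 - ‖∑ s, A s * (A s)ᴴ‖ ^ 2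
      ≤ (∑ s, ‖A s‖ ^ 2) ^ 2
        - (∑ s, ‖A s‖ ^ 2) * ∑ s, ‖A s * (A s)ᴴ‖ ^ 2 / ‖A s‖ ^ 2 := by
  have hminors : ∀ s, ‖minors (A s)‖ ^ 2 / ‖A s‖ ^ 2
      = 2 * (‖A s‖ ^ 2 - ‖A s * (A s)ᴴ‖ ^ 2 / ‖A s‖ ^ 2) := fun s => by
    rw [norm_minors_sq, mul_div_assoc, sub_div]
    congr 2
    rcases eq_or_ne ‖A s‖ 0 with h | h
    · simp [h]
    · field_simp
  calc ∑ s, ∑ t, ‖((A s)ᴴ * A t).trace‖ ^ 2 - ‖∑ s, A s * (A s)ᴴ‖ ^ 2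
      = ∑ s, ∑ t, (‖((A s)ᴴ * A t).trace‖ ^ 2 - ‖(A s)ᴴ * A t‖ ^ 2) := by
        simp only [norm_sum_gram_sq, Finset.sum_sub_distrib]
    _ ≤ ∑ s, ∑ t, ‖minors (A s)‖ * ‖minors (A t)‖ / 2 := by
        gcongr; exact norm_trace_sq_sub_norm_sq_le_norm_minors_mul _ _
    _ = ‖∑ s, ‖minors (A s)‖‖ ^ 2 / 2 := by
        rw [Real.norm_eq_abs, sq_abs, sq, Finset.sum_mul_sum]
        simp only [Finset.sum_div]
    _ ≤ (∑ s, ‖A s‖ ^ 2) * (∑ s, ‖minors (A s)‖ ^ 2 / ‖A s‖ ^ 2) / 2 := by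
        gcongr
        simpa only [norm_norm] using norm_sum_sq_le_sum_mul_sum_div Finset.univ
          (fun s => ‖minors (A s)‖) (fun s _ => sq_nonneg ‖A s‖)
          fun s _ h => by simp [minors, norm_eq_zero.mp (sq_eq_zero_iff.mp h)]
    _ = (∑ s, ‖A s‖ ^ 2) ^ 2
        - (∑ s, ‖A s‖ ^ 2) * ∑ s, ‖A s * (A s)ᴴ‖ ^ 2 / ‖A s‖ ^ 2 := by
        simp only [hminors, ← Finset.mul_sum, Finset.sum_sub_distrib]
        ring

lemma norm_sum_sq_div_trace_le {B : ι → Matrix n n 𝕜} (hB : ∀ i, (B i).PosSemidef) :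
    ‖∑ i, B i‖ ^ 2 / RCLike.re (∑ i, B i).trace ≤ ∑ i, ‖B i‖ ^ 2 / RCLike.re (B i).trace := by
  have htrace_nonneg : ∀ i, 0 ≤ RCLike.re (B i).trace := fun i =>
    (RCLike.nonneg_iff.mp (hB i).trace_nonneg).1
  have heq_zero : ∀ i, RCLike.re (B i).trace = 0 → ‖B i‖ = 0 := fun i h => by
    have htrace : (B i).trace = 0 :=
      RCLike.ext (by simpa using h) (by simpa using (RCLike.nonneg_iff.mp (hB i).trace_nonneg).2)
    rw [(hB i).trace_eq_zero_iff.mp htrace, norm_zero]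
  rw [trace_sum, map_sum]
  refine div_le_of_le_mul₀ (Finset.sum_nonneg fun i _ => htrace_nonneg i)
    (Finset.sum_nonneg fun i _ => div_nonneg (sq_nonneg _) (htrace_nonneg i)) ?_
  rw [mul_comm]
  exact norm_sum_sq_le_sum_mul_sum_div _ _ (fun i _ => htrace_nonneg i) fun i _ => heq_zero i

end Matrix

lemma norm_trB_sq_sub_norm_trA_sq_le {a b : Type} [Fintype a] [Fintype b]
    {ρ : Matrix (a × b) (a × b) ℂ} (hρ : ρ.PosSemidef) :
    ‖trB ρ‖ ^ 2 - ‖trA ρ‖ ^ 2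
      ≤ ρ.trace.re ^ 2 - ρ.trace.re * ∑ i, ‖diagBlock ρ i‖ ^ 2 / (diagBlock ρ i).trace.re := by
  obtain ⟨N, rfl⟩ := exists_eq_conjTranspose_mul_self hρ
  let slice : a → Matrix b (a × b) ℂ := fun i => Nᴴ.submatrix (Prod.mk i) id
  have hblock : ∀ i, diagBlock (Nᴴ * N) i = slice i * (slice i)ᴴ := fun i => by
    ext
    simp [slice, diagBlock, mul_apply]
  have htrA : trA (Nᴴ * N) = ∑ i, slice i * (slice i)ᴴ := by
    simp only [trA_eq_sum_diagBlock, hblock]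
  have htrB : ∀ i i', trB (Nᴴ * N) i' i = ((slice i)ᴴ * slice i').trace := fun i i' => by
    rw [trace_mul_comm]
    simp [slice, trB, trace, mul_apply]
  have hblock_trace : ∀ i, (diagBlock (Nᴴ * N) i).trace.re = ‖slice i‖ ^ 2 := fun i => by
    rw [hblock, trace_mul_conjTranspose_self_eq_norm_sq]
    norm_cast
  have htrace : (Nᴴ * N).trace.re = ∑ i, ‖slice i‖ ^ 2 := by
    simp only [← hblock_trace, ← trace_trA, trA_eq_sum_diagBlock, trace_sum, Complex.re_sum]
  have hnorm : ‖trB (Nᴴ * N)‖ ^ 2 = ∑ i, ∑ i', ‖((slice i)ᴴ * slice i').trace‖ ^ 2 := by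
    rw [frobenius_norm_sq_eq_sum, Finset.sum_comm]
    simp only [htrB]
  rw [hnorm, htrA, htrace]
  simp only [hblock_trace]
  simpa only [hblock] using sum_norm_trace_sq_sub_norm_sum_gram_sq_le slice

lemma SQ_eq_one_sub_norm_sq {d : Type} [Fintype d] {X : Matrix d d ℂ} (hX : X.IsHermitian) :
    SQ X = 1 - ‖X‖ ^ 2 := by
  have htrace := trace_conjTranspose_mul_self_eq_norm_sq X
  rw [hX.eq] at htrace
  rw [SQ, htrace]
  norm_cast

section Measurement

variable {a b : Type} [Fintype a] [DecidableEq a] [Fintype b] [DecidableEq b]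

lemma prob_eq_re_trace_unnormCondB (P : Matrix a a ℂ) (ρ : Matrix (a × b) (a × b) ℂ) :
    prob P ρ = (unnormCondB P ρ).trace.re := by
  rw [prob, unnormCondB, trace_trA]

lemma sum_unnormCondB {k : ℕ} {P : Fin k → Matrix a a ℂ} (hP : IsPOVM P)
    (ρ : Matrix (a × b) (a × b) ℂ) : ∑ j, unnormCondB (P j) ρ = trA ρ := by
  rw [← unnormCondB_sum, hP.2, unnormCondB_one]

lemma prob_mul_SQ_condB {P : Matrix a a ℂ} {ρ : Matrix (a × b) (a × b) ℂ}
    (hP : P.IsHermitian) (hρ : ρ.IsHermitian) :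
    prob P ρ * SQ (condB P ρ) = prob P ρ - ‖unnormCondB P ρ‖ ^ 2 / prob P ρ := by
  have hcond : condB P ρ = (((prob P ρ)⁻¹ : ℝ) : ℂ) • unnormCondB P ρ := rfl
  have hherm : (condB P ρ).IsHermitian := by
    rw [hcond, Matrix.IsHermitian, conjTranspose_smul, (unnormCondB_isHermitian hP hρ).eq,
      Complex.star_def, Complex.conj_ofReal]
  rw [SQ_eq_one_sub_norm_sq hherm, hcond, norm_smul, mul_pow, Complex.norm_real, Real.norm_eq_abs,
    sq_abs]
  rcases eq_or_ne (prob P ρ) 0 with h | h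
  · simp [h]
  · field_simp

lemma holevoB_SQF_eq {k : ℕ} {P : Fin k → Matrix a a ℂ} {ρ : Matrix (a × b) (a × b) ℂ}
    (hP : IsPOVM P) (hρ : IsDensity ρ) :
    holevoB SQF P ρ = ∑ j, ‖unnormCondB (P j) ρ‖ ^ 2 / prob (P j) ρ - ‖trA ρ‖ ^ 2 := by
  have hprob : ∑ j, prob (P j) ρ = 1 := by
    simp only [prob_eq_re_trace_unnormCondB, ← Complex.re_sum, ← trace_sum, sum_unnormCondB hP,
      trace_trA, hρ.2, Complex.one_re]
  have htrA : (trA ρ).IsHermitian := by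
    rw [Matrix.IsHermitian, ← trA_conjTranspose, hρ.1.isHermitian.eq]
  have hfilter : ∑ j with prob (P j) ρ ≠ 0, prob (P j) ρ * SQ (condB (P j) ρ)
      = ∑ j, prob (P j) ρ * SQ (condB (P j) ρ) :=
    Finset.sum_filter_of_ne fun _ _ h => left_ne_zero_of_mul h
  simp only [holevoB, SQF]
  rw [hfilter, SQ_eq_one_sub_norm_sq htrA]
  simp only [prob_mul_SQ_condB (hP.1 _).isHermitian hρ.1.isHermitian, Finset.sum_sub_distrib,
    hprob]
  ring

theorem quadratic_holevo_le_entropy_general {k : ℕ} {ρ : Matrix (a × b) (a × b) ℂ}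
    (hρ : IsDensity ρ) {P : Fin k → Matrix a a ℂ} (hP : IsPOVM P) :
    holevoB SQF P ρ ≤ SQ (trB ρ) := by
  choose Q hQ using fun j => exists_eq_conjTranspose_mul_self (hP.1 j)
  have hW : (stackRows Q)ᴴ * stackRows Q = 1 := by
    simp only [conjTranspose_stackRows_mul_stackRows, ← hQ, hP.2]
  set ρ' := conjFst (stackRows Q) ρ
  have hρ' : ρ'.PosSemidef := hρ.1.mul_mul_conjTranspose_same _
  have htrA : trA ρ' = trA ρ := by rw [trA_conjFst, hW, unnormCondB_one]
  have htrace : ρ'.trace.re = 1 := by rw [← trace_trA, htrA, trace_trA, hρ.2, Complex.one_re]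
  have htrB : ‖trB ρ'‖ = ‖trB ρ‖ := by rw [trB_conjFst, norm_isometry_conj hW]
  have hcoarse : ∀ j, ‖unnormCondB (P j) ρ‖ ^ 2 / prob (P j) ρ
      ≤ ∑ i, ‖diagBlock ρ' (j, i)‖ ^ 2 / (diagBlock ρ' (j, i)).trace.re := fun j => by
    rw [prob_eq_re_trace_unnormCondB, hQ, ← sum_diagBlock_conjFst_stackRows]
    exact norm_sum_sq_div_trace_le fun i => hρ'.submatrix _
  have hfine := norm_trB_sq_sub_norm_trA_sq_le hρ'
  rw [htrace, htrA, htrB, Fintype.sum_prod_type] at hfine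
  rw [holevoB_SQF_eq hP hρ, SQ_eq_one_sub_norm_sq (trB_isHermitian hρ.1.isHermitian)]
  linarith [Finset.sum_le_sum fun j (_ : j ∈ Finset.univ) => hcoarse j]

end Measurement

end Frobenius

/-- the quadratic Holevo quantity is bounded by the quadratic
entropy of the reduced state. -/
theorem quadratic_holevo_le_entropy
    (m n k : ℕ) (ρ : Matrix (Fin m × Fin n) (Fin m × Fin n) ℂ) (hρ : IsDensity ρ)
    (P : Fin k → Matrix (Fin m) (Fin m) ℂ) (hP : IsPOVM P) :
    holevoB SQF P ρ ≤ SQ (trB ρ) :=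
  quadratic_holevo_le_entropy_general hρ hP
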